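/- If the regular continued fraction expansion of the irrational α has only finitely many partial quotients equal to 1, then ρ(α) ≥ 1/(2√13 + 8) (= 1/15.211…). -/

import Mathlib

open Filter

/-- Distance from `x` to the nearest integer, `‖x‖`. -/
noncomputable def nint (x : ℝ) : ℝ := |x - round x|

/-- The two-sided inhomogeneous approximation constant
`M(α,γ) = liminf_{|n|→∞} |n|·‖nα-γ‖`. -/
noncomputable def Mval (α γ : ℝ) : ℝ :=
  Filter.liminf (fun n : ℤ => (|n| : ℝ) * nint (n * α - γ)) Filter.cofinite

/-- `ρ(α) = sup { M(α,γ) : γ ∉ ℤ + αℤ }`. -/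
noncomputable def rho (α : ℝ) : ℝ :=
  sSup {m : ℝ | ∃ γ : ℝ, (¬∃ p q : ℤ, γ = (p : ℝ) + (q : ℝ) * α) ∧ m = Mval α γ}

/-- The tails of the regular continued fraction expansion of `α`:
`t_0 = {α}`, `t_{n+1} = {1/t_n}`. -/
noncomputable def rcfT (α : ℝ) : ℕ → ℝ
  | 0 => Int.fract α
  | n + 1 => Int.fract (rcfT α n)⁻¹

/-- The regular continued fraction partial quotients `a_n = ⌊1/t_{n-1}⌋` (for `n ≥ 1`). -/
noncomputable def rcfA (α : ℝ) (n : ℕ) : ℤ := ⌊(rcfT α (n - 1))⁻¹⌋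



/-- The constant `x = [0;3,3,3,...]`. -/
noncomputable def xc : ℝ := (Real.sqrt 13 - 3) / 2

/-- Four times the target constant. -/
noncomputable def cc : ℝ := (2 - 4 * xc) / 3

lemma xc_sq : xc ^ 2 = 1 - 3 * xc := by
  have h : Real.sqrt 13 ^ 2 = 13 := Real.sq_sqrt (by norm_num)
  unfold xc; nlinarith

lemma xc_lo : (0.3027 : ℝ) < xc := by
  have : (3.6055 : ℝ) < Real.sqrt 13 := Real.lt_sqrt_of_sq_lt (by norm_num)
  unfold xc; linarith

lemma xc_hi : xc < (0.3028 : ℝ) := by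
  have : Real.sqrt 13 < 3.6056 := by
    rw [Real.sqrt_lt' (by norm_num)]; norm_num
  unfold xc; linarith

lemma cc_eq : 1 / (2 * Real.sqrt 13 + 8) = cc / 4 := by
  have h : Real.sqrt 13 ^ 2 = 13 := Real.sq_sqrt (by norm_num)
  have h0 : 0 ≤ Real.sqrt 13 := Real.sqrt_nonneg _
  unfold cc xc
  rw [div_eq_iff (by positivity)]
  nlinarith

/-- Abstract data of a two-sided expansion. -/
structure Sys where
  A : ℕ → ℤ
  Q : ℕ → ℝ
  D : ℕ → ℝ
  T : ℕ → ℝ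
  E : ℕ → ℝ
  hA : ∀ n, 1 ≤ A n
  Q0 : Q 0 = 0
  Q1 : Q 1 = 1
  Qrec : ∀ n, Q (n + 2) = A n * Q (n + 1) + Q n
  D0 : D 0 = 1
  Deven : ∀ n, Even (A n) → D (n + 1) = D n
  Dodd : ∀ n, Odd (A n) → D (n + 1) = Q (n + 1) - D n
  T0 : T 0 = 1
  Tpos : ∀ n, 0 < T n
  Trec : ∀ n, T n = A n * T (n + 1) + T (n + 2)
  Eeven : ∀ n, Even (A n) → E (n + 1) = - E n
  Eodd : ∀ n, Odd (A n) → E (n + 1) = E n + T (n + 1)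
  Ebd : ∀ n, |E n| ≤ 3 * T n

namespace Sys
variable (S : Sys)

lemma Qfacts (n : ℕ) : 0 ≤ S.Q n ∧ S.Q n ≤ S.Q (n + 1) ∧ 1 ≤ S.Q (n + 1) := by
  induction n with
  | zero => simp [S.Q0, S.Q1]
  | succ n ih =>
    obtain ⟨h1, h2, h3⟩ := ih
    have hA : (1 : ℝ) ≤ S.A n := by exact_mod_cast S.hA n
    have := S.Qrec n
    refine ⟨by linarith, by nlinarith, by nlinarith⟩

lemma Dfacts0 (n : ℕ) : 0 ≤ S.D n ∧ S.D n ≤ S.Q (n + 1) := by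
  induction n with
  | zero => simp [S.D0, S.Q1]
  | succ n ih =>
    have := S.Qfacts (n + 1)
    rcases Int.even_or_odd (S.A n) with h | h
    · rw [S.Deven n h]; exact ⟨ih.1, by linarith⟩
    · rw [S.Dodd n h]; exact ⟨by linarith, by linarith⟩

lemma Dfacts (n : ℕ) : 0 ≤ S.D (n + 1) ∧ S.D (n + 1) ≤ S.Q (n + 1) := by
  have := S.Dfacts0 n
  rcases Int.even_or_odd (S.A n) with h | h
  · rw [S.Deven n h]; exact this
  · rw [S.Dodd n h]; constructor <;> linarith

lemma det (n : ℕ) : S.Q (n + 1) * S.T n + S.Q n * S.T (n + 1) = 1 := by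
  induction n with
  | zero => simp [S.Q0, S.Q1, S.T0]
  | succ n ih =>
    rw [S.Trec n] at ih
    rw [S.Qrec n]; linarith

lemma Thalf (K : ℕ) (hK : ∀ n, K ≤ n → 2 ≤ S.A n)
    (n : ℕ) (hn : K ≤ n) : 2 * S.T (n + 1) + S.T (n + 2) ≤ S.T n := by
  have h : (2 : ℝ) ≤ S.A n := by exact_mod_cast hK n hn
  have := S.Trec n
  have := S.Tpos (n + 1)
  nlinarith

lemma Tthird (K : ℕ) (hK : ∀ n, K ≤ n → 2 ≤ S.A n)
    (n : ℕ) (hn : K ≤ n) (ho : Odd (S.A n)) :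
    3 * S.T (n + 1) + S.T (n + 2) ≤ S.T n := by
  have h : (3 : ℝ) ≤ S.A n := by
    have := hK n hn
    obtain ⟨k, hk⟩ := ho
    have : 3 ≤ S.A n := by omega
    exact_mod_cast this
  have := S.Trec n
  have := S.Tpos (n + 1)
  nlinarith

lemma descent (K : ℕ) (hK : ∀ n, K ≤ n → 2 ≤ S.A n)
    (F : ℕ → ℝ) (C : ℝ) (hC : 0 ≤ C) (hF : ∀ n, K ≤ n → -(C * S.T n) ≤ F n)
    (hs : ∀ n, K ≤ n → 0 ≤ F n ∨ F (n + 1) ≤ F n) (n : ℕ) (hn : K ≤ n) : 0 ≤ F n := by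
  have key : ∀ k : ℕ, ∀ n, K ≤ n → -(C * S.T n) / 2 ^ k ≤ F n := by
    intro k
    induction k with
    | zero => intro n hn; simpa using hF n hn
    | succ k ih =>
      intro n hn
      have h1 := S.Tpos n
      rcases hs n hn with h | h
      · refine le_trans ?_ h
        apply div_nonpos_of_nonpos_of_nonneg
        · nlinarith
        · positivity
      · refine le_trans ?_ (le_trans (ih (n + 1) (by omega)) h)
        have h2 := S.Thalf K hK n hn
        have h3 := S.Tpos (n + 2)
        rw [pow_succ, div_le_div_iff₀ (by positivity) (by positivity)]
        have : C * S.T (n + 1) * 2 ≤ C * S.T n := by nlinarith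
        have hp : (0 : ℝ) < 2 ^ k := by positivity
        nlinarith
  have hlim : Tendsto (fun k : ℕ => -(C * S.T n) / 2 ^ k) atTop (nhds 0) := by
    have := (tendsto_pow_atTop_nhds_zero_of_lt_one (r := (1 / 2 : ℝ)) (by norm_num)
      (by norm_num)).const_mul (-(C * S.T n))
    simpa [div_eq_mul_inv] using this
  exact le_of_tendsto' hlim (fun k => key k n hn)

lemma Ehalf (K : ℕ) (hK : ∀ n, K ≤ n → 2 ≤ S.A n)
    (n : ℕ) (hn : K ≤ n) : |S.E n| ≤ S.T n / 2 := by
  have := S.descent K hK (fun n => S.T n / 2 - |S.E n|) 3 (by norm_num)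
    (fun n _ => by have := S.Ebd n; have := S.Tpos n; linarith) ?_ n hn
  · linarith
  · intro n hn
    right
    have p1 := S.Tpos (n + 1)
    have p2 := S.Tpos (n + 2)
    rcases Int.even_or_odd (S.A n) with h | h
    · rw [S.Eeven n h, abs_neg]
      have := S.Thalf K hK n hn
      linarith
    · have h1 := S.Tthird K hK n hn h
      have h2 := S.Eodd n h
      have : |S.E n| ≤ |S.E (n + 1)| + S.T (n + 1) := by
        have : S.E n = S.E (n + 1) - S.T (n + 1) := by linarith
        rw [this]
        refine (abs_sub _ _).trans ?_
        rw [abs_of_pos p1]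
      linarith

lemma Eodd_abs (n : ℕ) (h : Odd (S.A n)) : |S.E n| ≤ |S.E (n + 1)| + S.T (n + 1) := by
  have p1 := S.Tpos (n + 1)
  have h2 := S.Eodd n h
  have : S.E n = S.E (n + 1) - S.T (n + 1) := by linarith
  rw [this]
  refine (abs_sub _ _).trans ?_
  rw [abs_of_pos p1]

lemma Eeven_abs (n : ℕ) (h : Even (S.A n)) : |S.E n| = |S.E (n + 1)| := by
  rw [S.Eeven n h, abs_neg]

lemma three (n : ℕ) (h : S.A n = 3) :
    S.T (n + 1) - xc * S.T n = - xc * (S.T (n + 2) - xc * S.T (n + 1)) := by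
  have := S.Trec n
  rw [h] at this
  push_cast at this
  have := xc_sq
  rw [‹S.T n = _›]
  linear_combination (-S.T (n + 1)) * this

lemma Tfive (K : ℕ) (hK : ∀ n, K ≤ n → 2 ≤ S.A n)
    (n : ℕ) (hn : K ≤ n) (ho : Odd (S.A n)) (h3 : S.A n ≠ 3) :
    5 * S.T (n + 1) ≤ S.T n := by
  have h : (5 : ℝ) ≤ S.A n := by
    have := hK n hn
    obtain ⟨k, hk⟩ := ho
    have : 5 ≤ S.A n := by omega
    exact_mod_cast this
  have := S.Trec n
  have := S.Tpos (n + 1)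
  have := S.Tpos (n + 2)
  nlinarith

lemma Hmain (K : ℕ) (hK : ∀ n, K ≤ n → 2 ≤ S.A n)
    (n : ℕ) (hn : K ≤ n) :
    4 * xc * |S.T (n + 1) - xc * S.T n| ≤ S.T n + S.T (n + 1) - 3 * |S.E n| := by
  have hx1 := xc_lo
  have hx2 := xc_hi
  have := S.descent K hK (fun n => S.T n + S.T (n + 1) - 3 * |S.E n|
      - 4 * xc * |S.T (n + 1) - xc * S.T n|) 20 (by norm_num) ?_ ?_ n hn
  · linarith
  · intro n hn
    have h1 := S.Ebd n
    have h2 := S.Tpos n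
    have h3 := S.Tpos (n + 1)
    have h4 := S.Tpos (n + 2)
    have h5 := S.Thalf K hK n hn
    have h6 : |S.T (n + 1) - xc * S.T n| ≤ S.T n := by
      rw [abs_le]; constructor <;> nlinarith
    have h7 : 4 * xc * |S.T (n + 1) - xc * S.T n| ≤ 2 * S.T n := by
      have := abs_nonneg (S.T (n + 1) - xc * S.T n)
      nlinarith
    linarith
  · intro n hn
    have h1 := S.Ehalf K hK (n + 1) (by omega)
    have h2 := S.Tpos n
    have h3 := S.Tpos (n + 1)
    have h4 := S.Tpos (n + 2)
    have h5 := S.Thalf K hK n hn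
    rcases Int.even_or_odd (S.A n) with h | h
    · left
      rw [S.Eeven_abs n h]
      have h6 : |S.T (n + 1) - xc * S.T n| ≤ 0.31 * S.T n := by
        rw [abs_le]; constructor <;> nlinarith
      have h7 : 4 * xc * |S.T (n + 1) - xc * S.T n| ≤ 4 * 0.31 * (0.31 * S.T n) := by
        have := abs_nonneg (S.T (n + 1) - xc * S.T n)
        nlinarith
      linarith
    · by_cases h3' : S.A n = 3
      · right
        rw [S.three n h3', abs_mul, abs_neg, abs_of_pos (by linarith : 0 < xc)]
        have h6 := S.Eodd_abs n h
        have h7 := S.Tthird K hK n hn h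
        have h8 := abs_nonneg (S.T (n + 2) - xc * S.T (n + 1))
        have : 4 * xc * (xc * |S.T (n + 2) - xc * S.T (n + 1)|) ≤
            4 * xc * |S.T (n + 2) - xc * S.T (n + 1)| := by
          have : xc * |S.T (n + 2) - xc * S.T (n + 1)| ≤ |S.T (n + 2) - xc * S.T (n + 1)| := by
            nlinarith
          nlinarith
        have e : n + 1 + 1 = n + 2 := rfl
        rw [e]
        linarith
      · left
        have h6 := S.Eodd_abs n h
        have h7 := S.Tfive K hK n hn h h3'
        rw [abs_of_nonpos (by nlinarith : S.T (n + 1) - xc * S.T n ≤ 0)]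
        have : 4 * xc * -(S.T (n + 1) - xc * S.T n) ≤ 
          4 * 0.3028 * (0.3028 * S.T n - S.T (n + 1)) := by
          have e1 : -(S.T (n + 1) - xc * S.T n) ≤ 0.3028 * S.T n - S.T (n + 1) := by nlinarith
          have e2 : 0 ≤ 0.3028 * S.T n - S.T (n + 1) := by nlinarith
          nlinarith
        linarith

lemma F3 (K : ℕ) (hK : ∀ n, K ≤ n → 2 ≤ S.A n)
    (n : ℕ) (hn : K ≤ n) : cc * S.T n ≤ S.T n - S.T (n + 1) - |S.E n| := by
  have hx1 := xc_lo
  have hx2 := xc_hi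
  have h1 := S.Hmain K hK (n + 1) (by omega)
  have h2 := S.Tpos n
  have h3 := S.Tpos (n + 1)
  have h4 := S.Tpos (n + 2)
  have h5 := S.Thalf K hK n hn
  have e : n + 1 + 1 = n + 2 := rfl
  rw [e] at h1
  have h8 := abs_nonneg (S.T (n + 2) - xc * S.T (n + 1))
  rcases Int.even_or_odd (S.A n) with h | h
  · rw [S.Eeven_abs n h]
    have : 0 ≤ 4 * xc * |S.T (n + 2) - xc * S.T (n + 1)| := by positivity
    have : cc * S.T n ≤ S.T n / 3 := by unfold cc; nlinarith
    linarith
  · have h6 := S.Eodd_abs n h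
    have h9 := S.Ehalf K hK (n + 1) (by omega)
    by_cases h3' : S.A n = 3
    · have t := S.three n h3'
      have h7 := S.Tthird K hK n hn h
      have : -(S.T (n + 2) - xc * S.T (n + 1)) ≤ |S.T (n + 2) - xc * S.T (n + 1)| := neg_le_abs _
      have : 4 * (S.T (n + 1) - xc * S.T n) ≤ 4 * xc * |S.T (n + 2) - xc * S.T (n + 1)| := by
        rw [t]; nlinarith
      unfold cc
      linarith
    · have h7 := S.Tfive K hK n hn h h3'
      have : cc * S.T n ≤ S.T n / 3 := by unfold cc; nlinarith
      linarith

lemma F45 (K : ℕ) (hK : ∀ n, K ≤ n → 2 ≤ S.A n)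
    (n : ℕ) (hn : K ≤ n) :
    S.E n ≤ S.T (n + 1) / 2 ∧ S.T n / 3 ≤ S.T n - S.T (n + 1) - S.E n := by
  have h1 := S.Hmain K hK (n + 1) (by omega)
  have h2 := S.Tpos n
  have h3 := S.Tpos (n + 1)
  have h4 := S.Tpos (n + 2)
  have h5 := S.Thalf K hK n hn
  have e : n + 1 + 1 = n + 2 := rfl
  rw [e] at h1
  have h8 := abs_nonneg (S.T (n + 2) - xc * S.T (n + 1))
  have h9 := S.Ehalf K hK (n + 1) (by omega)
  have hx1 := xc_lo
  have h10 : 0 ≤ 4 * xc * |S.T (n + 2) - xc * S.T (n + 1)| := by positivity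
  have h11 := neg_le_abs (S.E (n + 1))
  have h12 := le_abs_self (S.E (n + 1))
  rcases Int.even_or_odd (S.A n) with h | h
  · have := S.Eeven n h
    constructor <;> linarith
  · have := S.Eodd n h
    have h7 := S.Tthird K hK n hn h
    constructor <;> linarith

lemma F6 (K : ℕ) (hK : ∀ n, K ≤ n → 2 ≤ S.A n)
    (n : ℕ) (hn : K ≤ n) :
    cc * (3 * S.T n + S.T (n + 1)) ≤ S.T n + S.T (n + 1) - |S.E n| := by
  have h1 := S.Hmain K hK n hn
  have hx1 := xc_lo
  have h2 : -(S.T (n + 1) - xc * S.T n) ≤ |S.T (n + 1) - xc * S.T n| := neg_le_abs _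
  have h3 : 4 * xc * (-(S.T (n + 1) - xc * S.T n)) ≤ 4 * xc * |S.T (n + 1) - xc * S.T n| := by
    nlinarith
  have h4 := xc_sq
  have : 4 * xc * (-(S.T (n + 1) - xc * S.T n)) =
    4 * (1 - 3 * xc) * S.T n - 4 * xc * S.T (n + 1) := by rw [← h4]; ring
  unfold cc
  linarith

/-- vertex property -/
def P (n : ℕ) (D E : ℝ) : Prop :=
  (0 < S.Q (n + 1) + S.Q n + D ∧ 0 < S.T n - S.T (n + 1) + E ∧
    cc ≤ (S.Q (n + 1) + S.Q n + D) * (S.T n - S.T (n + 1) + E)) ∧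
  (0 < S.Q (n + 1) - S.Q n + D ∧ 0 < S.T n + S.T (n + 1) - E ∧
    cc ≤ (S.Q (n + 1) - S.Q n + D) * (S.T n + S.T (n + 1) - E))

lemma vert (K : ℕ) (hK : ∀ n, K ≤ n → 2 ≤ S.A n)
    (m : ℕ) (hm : K ≤ m) (h1m : 1 ≤ m) :
    S.P (m + 1) (S.D (m + 1)) (S.E (m + 1)) ∧ S.P (m + 1) (-S.D (m + 1)) (-S.E (m + 1)) := by
  obtain ⟨k, rfl⟩ : ∃ k, m = k + 1 := ⟨m - 1, by omega⟩
  set n := k + 1 + 1 with hn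
  have hx1 := xc_lo
  have hx2 := xc_hi
  have hc1 : 0 < cc := by unfold cc; linarith
  have hc2 : cc ≤ 0.264 := by unfold cc; linarith
  have hKn : K ≤ n := by omega
  have t0 := S.Tpos n
  have t1 := S.Tpos (n + 1)
  have t2 := S.Tpos (n + 2)
  have th := S.Thalf K hK n hKn
  have f1 := S.Ehalf K hK n hKn
  have f3 := S.F3 K hK n hKn
  have f45 := S.F45 K hK n hKn
  have f6 := S.F6 K hK n hKn
  have dd := S.det n
  have hq := S.Qfacts k
  have hq1 := S.Qfacts (k + 1)
  have hd := S.Dfacts k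
  have hd2 := S.Dfacts (k + 1)
  have hqr := S.Qrec (k + 1)
  have hA : (2 : ℝ) ≤ S.A (k + 1) := by exact_mod_cast hK _ hm
  have e1 : k + 1 + 2 = n + 1 := by omega
  have e2 : k + 1 + 1 = n := by omega
  simp only [e1, e2] at hqr hd2 hq1
  have hqq : 2 * S.Q n + S.Q (k + 1) ≤ S.Q (n + 1) := by
    have hz : 0 ≤ ((S.A (k + 1) : ℝ) - 2) * S.Q n := mul_nonneg (by linarith) (by linarith)
    linarith
  have n1 := neg_le_abs (S.E n)
  have n2 := le_abs_self (S.E n)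
  have hw : S.Q n ≤ S.Q (n + 1) - S.Q n - S.D n ∧
      S.Q (n + 1) ≤ 3 * (S.Q (n + 1) - S.Q n - S.D n) := by
    rcases Int.even_or_odd (S.A (k + 1)) with h | h
    · have := S.Deven _ h
      rw [e2] at this
      have hz : 0 ≤ ((S.A (k + 1) : ℝ) - 2) * S.Q n := mul_nonneg (by linarith) (by linarith)
      constructor <;> linarith
    · have := S.Dodd _ h
      rw [e2] at this
      have hA : (3 : ℝ) ≤ S.A (k + 1) := by
        have := hK _ hm
        obtain ⟨r, hr⟩ := h
        have : 3 ≤ S.A (k + 1) := by omega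
        exact_mod_cast this
      have hz : 0 ≤ ((S.A (k + 1) : ℝ) - 3) * S.Q n := mul_nonneg (by linarith) (by linarith)
      constructor <;> linarith
  set q := S.Q n
  set q' := S.Q (n + 1)
  set d := S.D n
  set T := S.T n
  set T' := S.T (n + 1)
  set E := S.E n
  have hq0 : 0 ≤ q := by linarith
  have hq0' : 1 ≤ q' := by linarith
  have s1 : cc ≤ (q' + q + d) * (T - T' + E) := by
    have a1 : (q' + q) * (cc * T) ≤ (q' + q + d) * (T - T' + E) := by
      apply mul_le_mul <;> first | linarith | positivity
    have : cc * (q' * T + q * T') ≤ (q' + q) * (cc * T) := by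
      have : cc * q * T' ≤ cc * q * T := by
        apply mul_le_mul_of_nonneg_left (by linarith); positivity
      linarith
    rw [dd] at this; linarith
  have s2 : cc ≤ (q' - q + d) * (T + T' - E) := by
    have a1 : (q' / 2) * (T + T' / 2) ≤ (q' - q + d) * (T + T' - E) := by
      apply mul_le_mul <;> first | linarith | positivity
    have : cc * (q' * T + q * T') ≤ (q' / 2) * (T + T' / 2) := by
      rw [dd]
      have : q * T' ≤ q' / 2 * T' := by
        apply mul_le_mul_of_nonneg_right (by linarith); positivity
      linarith
    rw [dd] at this; linarith
  have s3 : cc ≤ (q' + q - d) * (T - T' - E) := by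
    have a1 : q' * (T / 3) ≤ (q' + q - d) * (T - T' - E) := by
      apply mul_le_mul <;> first | linarith | positivity
    have : q * T' ≤ (q' / 2) * (T / 2) := by
      apply mul_le_mul <;> first | linarith | positivity
    linarith
  have s4 : cc ≤ (q' - q - d) * (T + T' + E) := by
    have a1 : (q' - q - d) * (cc * (3 * T + T')) ≤ (q' - q - d) * (T + T' + E) := by
      apply mul_le_mul <;> first | linarith | positivity
    have a2 : q' * T ≤ 3 * (q' - q - d) * T := by
      apply mul_le_mul_of_nonneg_right (by linarith); positivity
    have a3 : q * T' ≤ (q' - q - d) * T' := by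
      apply mul_le_mul_of_nonneg_right (by linarith); positivity
    have : cc * (q' * T + q * T') ≤ cc * ((q' - q - d) * (3 * T + T')) := by
      apply mul_le_mul_of_nonneg_left _ hc1.le; linarith
    rw [dd] at this; linarith
  have hcT : 0 < cc * T := by positivity
  have hcT' : 0 < cc * (3 * T + T') := by positivity
  refine ⟨⟨⟨?_, ?_, s1⟩, ?_, ?_, s2⟩, ⟨⟨?_, ?_, ?_⟩, ?_, ?_, ?_⟩⟩ <;>
    first
    | linarith
    | (simpa only [sub_eq_add_neg, neg_neg] using s3)
    | (simpa only [sub_eq_add_neg, neg_neg] using s4)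

/-- concavity step -/
lemma stepL (n : ℕ) (D E D' E' t : ℝ) (i j : ℝ) (hi : 1 ≤ i) (hj : 1 ≤ j)
    (hD : D' = D - t * S.Q (n + 1)) (hE : E' = -(E + t * S.T (n + 1)))
    (hP : S.P n D E) (hP' : S.P (n + 1) D' E') (hji : j ≤ S.A n * i - t - 1) :
    cc ≤ (i * S.Q n + j * S.Q (n + 1) + D) * (i * S.T n - j * S.T (n + 1) + E) := by
  obtain ⟨⟨p1, p2, p3⟩, -⟩ := hP
  obtain ⟨-, ⟨r1, r2, r3⟩⟩ := hP'
  have hq := S.Qfacts n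
  have hq1 := S.Qfacts (n + 1)
  have hqr := S.Qrec n
  have htr := S.Trec n
  have t0 := S.Tpos n
  have t1 := S.Tpos (n + 1)
  have t2 := S.Tpos (n + 2)
  have e : n + 1 + 1 = n + 2 := rfl
  rw [e] at r1 r2 r3 hq1
  -- left endpoint
  have L : cc ≤ (i * S.Q n + 1 * S.Q (n + 1) + D) * (i * S.T n - 1 * S.T (n + 1) + E) := by
    refine p3.trans ?_
    apply mul_le_mul <;> nlinarith
  have R : cc ≤ (-S.Q (n + 1) + i * S.Q (n + 2) + D') * (S.T (n + 1) + i * S.T (n + 2) - E') := by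
    refine r3.trans ?_
    apply mul_le_mul <;> nlinarith
  set J := S.A n * i - t - 1 with hJ
  have R' : cc ≤ (i * S.Q n + J * S.Q (n + 1) + D) * (i * S.T n - J * S.T (n + 1) + E) := by
    have e1 : i * S.Q n + J * S.Q (n + 1) + D = -S.Q (n + 1) + i * S.Q (n + 2) + D' := by
      rw [hqr, hD, hJ]; ring
    have e2 : i * S.T n - J * S.T (n + 1) + E = S.T (n + 1) + i * S.T (n + 2) - E' := by
      rw [hE, hJ]; linear_combination i * htr
    rw [e1, e2]; exact R
  rcases eq_or_lt_of_le hj with h | h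
  · rw [← h]; exact L
  have hJ1 : 0 < J - 1 := by linarith
  have key : (J - 1) * ((i * S.Q n + j * S.Q (n + 1) + D) * (i * S.T n - j * S.T (n + 1) + E)) =
     (J - j) * ((i * S.Q n + 1 * S.Q (n + 1) + D) * (i * S.T n - 1 * S.T (n + 1) + E)) +
     (j - 1) * ((i * S.Q n + J * S.Q (n + 1) + D) * (i * S.T n - J * S.T (n + 1) + E)) +
     (J - 1) * ((J - j) * (j - 1) * (S.Q (n + 1) * S.T (n + 1))) := by ring
  have k1 := mul_le_mul_of_nonneg_left L (by linarith : 0 ≤ J - j)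
  have k2 := mul_le_mul_of_nonneg_left R' (by linarith : 0 ≤ j - 1)
  have k3 : 0 ≤ (J - 1) * ((J - j) * (j - 1) * (S.Q (n + 1) * S.T (n + 1))) := by
    have : 0 ≤ S.Q (n + 1) := by linarith
    have : 0 ≤ J - j := by linarith
    have : 0 ≤ j - 1 := by linarith
    positivity
  have : (J - 1) * cc ≤
    (J - 1) * ((i * S.Q n + j * S.Q (n + 1) + D) * (i * S.T n - j * S.T (n + 1) + E)) := by
    rw [key]; linarith
  exact le_of_mul_le_mul_left this hJ1

lemma same (K : ℕ) (hK : ∀ n, K ≤ n → 2 ≤ S.A n)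
    (hK1 : 1 ≤ K) (N : ℕ) : ∀ (n : ℕ) (κ : ℝ) (i j : ℤ), K + 1 ≤ n → (κ = 1 ∨ κ = -1) →
    1 ≤ i → 1 ≤ j → Odd i → Odd j → j ≤ N →
    cc ≤ |(i * S.Q n + j * S.Q (n + 1) + κ * S.D n) *
      (i * S.T n - j * S.T (n + 1) + κ * S.E n)| := by
  induction N with
  | zero => intro n κ i j _ _ _ hj _ _ hN; push_cast at hN; omega
  | succ N ih =>
    intro n κ i j hn hκ hi hj oi oj hN
    have hPn : ∀ n, K + 1 ≤ n → ∀ κ : ℝ, (κ = 1 ∨ κ = -1) → S.P n (κ * S.D n) (κ * S.E n) := by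
      intro n hn κ hκ
      obtain ⟨m, rfl⟩ : ∃ m, n = m + 1 := ⟨n - 1, by omega⟩
      have := S.vert K hK m (by omega) (by omega)
      rcases hκ with rfl | rfl
      · simpa using this.1
      · simpa using this.2
    have hA := hK n (by omega)
    obtain ⟨t, κ', ht1, ht2, hκ', hD, hE⟩ : ∃ (t : ℤ) (κ' : ℝ), Odd (j - S.A n * i + t) ∧
        S.A n * i - t ≥ 2 * i ∧ (κ' = 1 ∨ κ' = -1) ∧
        κ' * S.D (n + 1) = κ * S.D n - t * S.Q (n + 1) ∧
        κ' * S.E (n + 1) = -(κ * S.E n + t * S.T (n + 1)) := by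
      rcases Int.even_or_odd (S.A n) with h | h
      · refine ⟨0, κ, ?_, ?_, hκ, ?_, ?_⟩
        · have : Even (S.A n * i) := h.mul_right i
          simpa using oj.sub_even this
        · nlinarith
        · rw [S.Deven n h]; simp
        · rw [S.Eeven n h]; simp
      · have hev : Even (j - S.A n * i) := oj.sub_odd (h.mul oi)
        have hA3 : 3 ≤ S.A n := by
          obtain ⟨k, hk⟩ := h
          omega
        rcases hκ with rfl | rfl
        · refine ⟨1, -1, hev.add_odd odd_one, by nlinarith, Or.inr rfl, ?_, ?_⟩
          · rw [S.Dodd n h]; push_cast; ring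
          · rw [S.Eodd n h]; push_cast; ring
        · refine ⟨-1, 1, hev.add_odd (by decide), by nlinarith, Or.inl rfl, ?_, ?_⟩
          · rw [S.Dodd n h]; push_cast; ring
          · rw [S.Eodd n h]; push_cast; ring
    by_cases hlt : j - S.A n * i + t ≤ 0
    · have hlt' : j - S.A n * i + t ≤ -1 := by
        obtain ⟨k, hk⟩ := ht1
        omega
      refine le_trans ?_ (le_abs_self _)
      refine S.stepL n (κ * S.D n) (κ * S.E n) (κ' * S.D (n + 1)) (κ' * S.E (n + 1)) t i j
        (by exact_mod_cast hi) (by exact_mod_cast hj) hD hE (hPn n hn κ hκ)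
        (hPn (n + 1) (by omega) κ' hκ') ?_
      have : j ≤ S.A n * i - t - 1 := by linarith
      exact_mod_cast this
    · have hi' : 1 ≤ j - S.A n * i + t := by omega
      have := ih (n + 1) κ' (j - S.A n * i + t) i (by omega) hκ' hi' hi ht1 oi
        (by push_cast at hN; linarith)
      refine this.trans (le_of_eq ?_)
      have e : n + 1 + 1 = n + 2 := rfl
      rw [hD, hE, e, S.Qrec n, S.Trec n, ← abs_neg]
      congr 1
      push_cast
      ring

/-- Every grid point is represented at every level. -/
lemma rep (X Y : ℝ) (I0 J0 : ℤ) (oI : Odd I0) (oJ : Odd J0)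
    (hX : |X| = |I0 * S.Q 0 + J0 * S.Q 1 + S.D 0|)
    (hY : |Y| = |I0 * S.T 0 - J0 * S.T 1 + S.E 0|) (n : ℕ) :
    ∃ I J : ℤ, Odd I ∧ Odd J ∧ |X| = |I * S.Q n + J * S.Q (n + 1) + S.D n| ∧
      |Y| = |I * S.T n - J * S.T (n + 1) + S.E n| := by
  induction n with
  | zero => exact ⟨I0, J0, oI, oJ, hX, hY⟩
  | succ n ih =>
    obtain ⟨I, J, oI, oJ, hX, hY⟩ := ih
    have e : n + 1 + 1 = n + 2 := rfl
    rcases Int.even_or_odd (S.A n) with h | h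
    · refine ⟨J - S.A n * I, I, oJ.sub_even (h.mul_right I), oI, ?_, ?_⟩
      · rw [hX, e, S.Qrec n, S.Deven n h]; congr 1; push_cast; ring
      · rw [hY, e, S.Trec n, S.Eeven n h, ← abs_neg]; congr 1; push_cast; ring
    · refine ⟨-(J - S.A n * I + 1), -I, ((oJ.sub_odd (h.mul oI)).add_odd odd_one).neg, oI.neg,
        ?_, ?_⟩
      · rw [hX, e, S.Qrec n, S.Dodd n h, ← abs_neg]; congr 1; push_cast; ring
      · rw [hY, e, S.Trec n, S.Eodd n h]; congr 1; push_cast; ring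

lemma mainGrid (K : ℕ) (hK : ∀ n, K ≤ n → 2 ≤ S.A n)
    (hK1 : 1 ≤ K) : ∃ C : ℝ, ∀ (X Y : ℝ) (I0 J0 : ℤ), Odd I0 → Odd J0 →
    |X| = |I0 * S.Q 0 + J0 * S.Q 1 + S.D 0| →
    |Y| = |I0 * S.T 0 - J0 * S.T 1 + S.E 0| →
    cc ≤ |X| * |Y| ∨ (0 < |Y| ∧ |X| ≤ C * (|Y| + 1)) := by
  set n := K + 1 with hn
  have q0 := S.Qfacts n
  have t0 := S.Tpos n
  have t1 := S.Tpos (n + 1)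
  have eh := S.Ehalf K hK n (by omega)
  have d0 := S.Dfacts0 n
  refine ⟨2 * S.Q n / S.T n + S.Q (n + 1) / S.T (n + 1) + S.Q (n + 1), ?_⟩
  intro X Y I0 J0 oI oJ hX hY
  obtain ⟨I, J, oI, oJ, hX, hY⟩ := S.rep X Y I0 J0 oI oJ hX hY n
  have hI0 : I ≠ 0 := by rintro rfl; simp at oI
  have hJ0 : J ≠ 0 := by rintro rfl; simp at oJ
  have aux : ∀ κ : ℝ, (κ = 1 ∨ κ = -1) → ∀ i j : ℤ, 1 ≤ i → 1 ≤ j →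
      |X| = |i * S.Q n - j * S.Q (n + 1) + κ * S.D n| →
      |Y| = |i * S.T n + j * S.T (n + 1) + κ * S.E n| →
      (0 < |Y| ∧ |X| ≤ (2 * S.Q n / S.T n + S.Q (n + 1) / S.T (n + 1) + S.Q (n + 1))
        * (|Y| + 1)) := by
    intro κ hκ i j hi hj hX hY
    have hi' : (1 : ℝ) ≤ i := by exact_mod_cast hi
    have hj' : (1 : ℝ) ≤ j := by exact_mod_cast hj
    have hκE : -(S.T n / 2) ≤ κ * S.E n := by
      have := abs_le.1 eh
      rcases hκ with rfl | rfl <;> linarith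
    have hκD : |κ * S.D n| ≤ S.Q (n + 1) := by
      rw [abs_le]
      rcases hκ with rfl | rfl <;> constructor <;> linarith
    have hYl : i * S.T n / 2 + j * S.T (n + 1) ≤ |Y| := by
      rw [hY]
      refine le_trans ?_ (le_abs_self _)
      nlinarith
    have hp1 : 0 < i * S.T n / 2 := by positivity
    have hp2 : 0 < j * S.T (n + 1) := by positivity
    refine ⟨by linarith, ?_⟩
    have hib : (i : ℝ) ≤ 2 * |Y| / S.T n := by rw [le_div_iff₀ t0]; linarith
    have hjb : (j : ℝ) ≤ |Y| / S.T (n + 1) := by rw [le_div_iff₀ t1]; linarith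
    have hXu : |X| ≤ i * S.Q n + j * S.Q (n + 1) + S.Q (n + 1) := by
      rw [hX]
      have := abs_le.1 hκD
      rw [abs_le]
      constructor <;> nlinarith
    have b1 : i * S.Q n ≤ 2 * |Y| / S.T n * S.Q n := mul_le_mul_of_nonneg_right hib q0.1
    have b2 : j * S.Q (n + 1) ≤ |Y| / S.T (n + 1) * S.Q (n + 1) :=
      mul_le_mul_of_nonneg_right hjb (by linarith)
    have c1 : 0 ≤ S.Q n / S.T n := div_nonneg q0.1 t0.le
    have c2 : 0 ≤ S.Q (n + 1) / S.T (n + 1) := div_nonneg (by linarith) t1.le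
    have c3 : 0 ≤ S.Q (n + 1) * |Y| := mul_nonneg (by linarith) (abs_nonneg _)
    have e1 : 2 * |Y| / S.T n * S.Q n = 2 * S.Q n / S.T n * |Y| := by ring
    have e2 : |Y| / S.T (n + 1) * S.Q (n + 1) = S.Q (n + 1) / S.T (n + 1) * |Y| := by ring
    have e3 : 2 * S.Q n / S.T n = 2 * (S.Q n / S.T n) := by ring
    rw [e1] at b1
    rw [e2] at b2
    rw [e3] at b1 ⊢
    have e4 : (2 * (S.Q n / S.T n) + S.Q (n + 1) / S.T (n + 1) + S.Q (n + 1)) * (|Y| + 1) =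
      2 * (S.Q n / S.T n) * |Y| + S.Q (n + 1) / S.T (n + 1) * |Y| + S.Q (n + 1) * |Y| +
      2 * (S.Q n / S.T n) + S.Q (n + 1) / S.T (n + 1) + S.Q (n + 1) := by ring
    rw [e4]
    linarith
  rcases lt_or_gt_of_ne hI0 with hI | hI <;> rcases lt_or_gt_of_ne hJ0 with hJ | hJ
  · left
    have := S.same K hK hK1 (-J).toNat n (-1) (-I) (-J) le_rfl (Or.inr rfl) (by omega) (by omega)
      oI.neg oJ.neg (by omega)
    rw [hX, hY, ← abs_mul]
    refine this.trans (le_of_eq ?_)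
    congr 1; push_cast; ring
  · right
    refine aux (-1) (Or.inr rfl) (-I) J (by omega) (by omega) ?_ ?_
    · rw [hX, ← abs_neg]; congr 1; push_cast; ring
    · rw [hY, ← abs_neg]; congr 1; push_cast; ring
  · right
    refine aux 1 (Or.inl rfl) I (-J) (by omega) (by omega) ?_ ?_
    · rw [hX]; congr 1; push_cast; ring
    · rw [hY]; congr 1; push_cast; ring
  · left
    have := S.same K hK hK1 J.toNat n 1 I J le_rfl (Or.inl rfl) (by omega) (by omega)
      oI oJ (by omega)
    rw [hX, hY, ← abs_mul]
    refine this.trans (le_of_eq ?_)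
    congr 1; push_cast; ring

end Sys

/-! ### Construction of the system -/

noncomputable def qs (A : ℕ → ℤ) : ℕ → ℝ
  | 0 => 0
  | 1 => 1
  | n + 2 => A n * qs A (n + 1) + qs A n

noncomputable def ds (A : ℕ → ℤ) : ℕ → ℝ
  | 0 => 1
  | n + 1 => if Even (A n) then ds A n else qs A (n + 1) - ds A n

noncomputable def ts (t : ℕ → ℝ) : ℕ → ℝ
  | 0 => 1
  | n + 1 => ts t n * t n

noncomputable def gs (A : ℕ → ℤ) : ℕ → ℝ
  | 0 => 1
  | n + 1 => if Even (A n) then - gs A n else gs A n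

noncomputable def cs (A : ℕ → ℤ) (T : ℕ → ℝ) (j : ℕ) : ℝ :=
  if Even (A j) then 0 else gs A j * T (j + 1)

noncomputable def es (A : ℕ → ℤ) (T : ℕ → ℝ) (n : ℕ) : ℝ :=
  - gs A n * (∑' j, cs A T j - ∑ j ∈ Finset.range n, cs A T j)

lemma gs_sq (A : ℕ → ℤ) (n : ℕ) : gs A n * gs A n = 1 := by
  induction n with
  | zero => simp [gs]
  | succ n ih => unfold gs; split_ifs <;> simp [ih]

lemma gs_abs (A : ℕ → ℤ) (n : ℕ) : |gs A n| = 1 := by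
  have := gs_sq A n
  rw [← abs_mul_abs_self] at this
  nlinarith [abs_nonneg (gs A n)]

lemma Tsum (T : ℕ → ℝ) (hT : ∀ n, T (n + 1) + T (n + 2) ≤ T n) (n m : ℕ) :
    ∑ j ∈ Finset.range m, T (j + n + 1) + T (n + m) + T (n + m + 1) ≤ T n + T (n + 1) := by
  induction m with
  | zero => simp
  | succ m ih =>
    rw [Finset.sum_range_succ]
    have h := hT (n + m)
    have e : m + n + 1 = n + m + 1 := by omega
    have e1 : n + (m + 1) = n + m + 1 := by omega
    rw [e, e1]
    have e2 : n + m + 1 + 1 = n + m + 2 := by omega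
    rw [e2]
    linarith

lemma cs_abs (A : ℕ → ℤ) (T : ℕ → ℝ) (hp : ∀ n, 0 < T n) (j : ℕ) : |cs A T j| ≤ T (j + 1) := by
  unfold cs
  split_ifs
  · simpa using (hp _).le
  · rw [abs_mul, gs_abs, abs_of_pos (hp _), one_mul]

lemma cs_sum (A : ℕ → ℤ) (T : ℕ → ℝ) (hp : ∀ n, 0 < T n)
    (hT : ∀ n, T (n + 1) + T (n + 2) ≤ T n) (n m : ℕ) :
    ∑ j ∈ Finset.range m, |cs A T (j + n)| ≤ 2 * T n := by
  have h1 := Tsum T hT n m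
  have h2 : ∑ j ∈ Finset.range m, |cs A T (j + n)| ≤ ∑ j ∈ Finset.range m, T (j + n + 1) :=
    Finset.sum_le_sum (fun j _ => cs_abs A T hp _)
  have := hp (n + m)
  have := hp (n + m + 1)
  have := hp (n + 2)
  have := hT n
  linarith

lemma es_bd (A : ℕ → ℤ) (T : ℕ → ℝ) (hp : ∀ n, 0 < T n)
    (hT : ∀ n, T (n + 1) + T (n + 2) ≤ T n) (n : ℕ) : |es A T n| ≤ 3 * T n := by
  have hs : ∀ n, Summable (fun j => |cs A T (j + n)|) := fun n =>
    summable_of_sum_range_le (fun _ => abs_nonneg _) (cs_sum A T hp hT n)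
  have hs0 : Summable (cs A T) := (by simpa using hs 0 : Summable fun j => |cs A T j|).of_abs
  have e := hs0.sum_add_tsum_nat_add n
  unfold es
  rw [← e, add_sub_cancel_left, abs_mul, abs_neg, gs_abs, one_mul]
  have h1 : |∑' j, cs A T (j + n)| ≤ ∑' j, |cs A T (j + n)| := by
    have := norm_tsum_le_tsum_norm (f := fun j => cs A T (j + n)) (by simpa using hs n)
    simpa using this
  have h2 : ∑' j, |cs A T (j + n)| ≤ 2 * T n :=
    (hs n).tsum_le_of_sum_range_le (cs_sum A T hp hT n)
  have := hp n
  linarith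

lemma rcfT_irr (α : ℝ) (h : Irrational α) (n : ℕ) : Irrational (rcfT α n) := by
  induction n with
  | zero => unfold rcfT; exact h.sub_intCast _
  | succ n ih => unfold rcfT; exact (irrational_inv_iff.2 ih).sub_intCast _

lemma rcfT_mem (α : ℝ) (h : Irrational α) (n : ℕ) : 0 < rcfT α n ∧ rcfT α n < 1 := by
  have h0 : rcfT α n ≠ 0 := (rcfT_irr α h n).ne_zero
  cases n with
  | zero => exact ⟨lt_of_le_of_ne (Int.fract_nonneg _) (Ne.symm h0), Int.fract_lt_one _⟩
  | succ n => exact ⟨lt_of_le_of_ne (Int.fract_nonneg _) (Ne.symm h0), Int.fract_lt_one _⟩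

lemma ts_pos (α : ℝ) (h : Irrational α) (n : ℕ) : 0 < ts (rcfT α) n := by
  induction n with
  | zero => simp [ts]
  | succ n ih => exact mul_pos ih (rcfT_mem α h n).1

lemma ts_rec (α : ℝ) (h : Irrational α) (n : ℕ) : ts (rcfT α) n =
    (⌊(rcfT α n)⁻¹⌋ : ℤ) * ts (rcfT α) (n + 1) + ts (rcfT α) (n + 2) := by
  have e : rcfT α (n + 1) = (rcfT α n)⁻¹ - (⌊(rcfT α n)⁻¹⌋ : ℤ) := rfl
  have h0 := (rcfT_mem α h n).1.ne'
  have e1 : ts (rcfT α) (n + 2) = ts (rcfT α) n * rcfT α n * rcfT α (n + 1) := rfl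
  have e2 : ts (rcfT α) (n + 1) = ts (rcfT α) n * rcfT α n := rfl
  rw [e1, e2, e]
  field_simp
  ring

lemma A_pos (α : ℝ) (h : Irrational α) (n : ℕ) : 1 ≤ ⌊(rcfT α n)⁻¹⌋ := by
  have := rcfT_mem α h n
  rw [Int.le_floor]
  push_cast
  exact (one_le_inv₀ this.1).2 this.2.le

lemma ts_le (α : ℝ) (h : Irrational α) (n : ℕ) :
    ts (rcfT α) (n + 1) + ts (rcfT α) (n + 2) ≤ ts (rcfT α) n := by
  have h1 := ts_rec α h n
  have h2 : (1 : ℝ) ≤ (⌊(rcfT α n)⁻¹⌋ : ℤ) := by exact_mod_cast A_pos α h n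
  have h3 := ts_pos α h (n + 1)
  nlinarith

noncomputable def sysOf (α : ℝ) (h : Irrational α) : Sys where
  A := fun n => ⌊(rcfT α n)⁻¹⌋
  Q := qs (fun n => ⌊(rcfT α n)⁻¹⌋)
  D := ds (fun n => ⌊(rcfT α n)⁻¹⌋)
  T := ts (rcfT α)
  E := es (fun n => ⌊(rcfT α n)⁻¹⌋) (ts (rcfT α))
  hA := A_pos α h
  Q0 := rfl
  Q1 := rfl
  Qrec := fun n => rfl
  D0 := rfl
  Deven := fun n hn => by rw [ds]; exact if_pos hn
  Dodd := fun n hn => by rw [ds]; exact if_neg (Int.not_even_iff_odd.2 hn)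
  T0 := rfl
  Tpos := ts_pos α h
  Trec := ts_rec α h
  Eeven := fun n hn => by
    simp only [es, Finset.sum_range_succ]
    simp only [gs, cs, if_pos hn]
    ring
  Eodd := fun n hn => by
    have hn' := Int.not_even_iff_odd.2 hn
    have hg := gs_sq (fun n => ⌊(rcfT α n)⁻¹⌋) n
    simp only [es, Finset.sum_range_succ]
    rw [show gs (fun n => ⌊(rcfT α n)⁻¹⌋) (n + 1) = gs (fun n => ⌊(rcfT α n)⁻¹⌋) n from
      if_neg hn']
    rw [show cs (fun n => ⌊(rcfT α n)⁻¹⌋) (ts (rcfT α)) n =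
      gs (fun n => ⌊(rcfT α n)⁻¹⌋) n * ts (rcfT α) (n + 1) from if_neg hn']
    linear_combination (ts (rcfT α) (n + 1)) * hg
  Ebd := es_bd _ _ (ts_pos α h) (ts_le α h)

/-! ### Upper bound -/

lemma big_den (α : ℝ) (h : Irrational α) (B : ℕ) :
    ∃ q : ℚ, |α - q| < 1 / (q.den : ℝ) ^ 2 ∧ B < q.den := by
  by_contra hcon
  push Not at hcon
  have hinf := Real.infinite_rat_abs_sub_lt_one_div_den_sq_of_irrational h
  apply hinf
  obtain ⟨M, hM⟩ := exists_nat_ge ((|α| + 1) * B)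
  have hfin : ((Set.Icc (-(M : ℤ)) M) ×ˢ (Set.Iic B)).Finite :=
    (Set.finite_Icc _ _).prod (Set.finite_Iic _)
  refine Set.Finite.of_injOn (f := fun q : ℚ => (q.num, q.den)) ?_ ?_ hfin
  · intro q hq
    have hB := hcon q hq
    have hq' : |α - q| < 1 / (q.den : ℝ) ^ 2 := hq
    have hd : (1 : ℝ) ≤ q.den := by exact_mod_cast q.den_pos
    have h1 : 1 / (q.den : ℝ) ^ 2 ≤ 1 := by
      rw [div_le_one (by positivity)]; nlinarith
    have h2 : |(q : ℝ)| ≤ |α| + 1 := by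
      have : (q : ℝ) = α - (α - q) := by ring
      rw [this]
      refine (abs_sub _ _).trans ?_
      linarith
    have h3 : (q.num : ℝ) = q * q.den := by
      have := Rat.mul_den_eq_num q
      exact_mod_cast this.symm
    have h4 : |(q.num : ℝ)| ≤ M := by
      rw [h3, abs_mul, abs_of_pos (by linarith : (0 : ℝ) < q.den)]
      have : (q.den : ℝ) ≤ B := by exact_mod_cast hB
      refine le_trans ?_ hM
      apply mul_le_mul h2 this <;> positivity
    have h5 := abs_le.1 h4
    refine ⟨⟨?_, ?_⟩, hB⟩
    · exact_mod_cast h5.1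
    · exact_mod_cast h5.2
  · intro a _ b _ hab
    simp only [Prod.mk.injEq] at hab
    exact Rat.ext hab.1 hab.2

lemma upper (α γ : ℝ) (h : Irrational α) :
    ∃ᶠ n : ℤ in Filter.cofinite, (|n| : ℝ) * nint (n * α - γ) ≤ 5 := by
  rw [Filter.frequently_cofinite_iff_infinite]
  apply Set.infinite_of_forall_exists_gt
  intro B
  obtain ⟨q, hq, hB⟩ := big_den α h B.toNat
  obtain ⟨d, hd⟩ : ∃ d : ℤ, d = (q.den : ℤ) := ⟨_, rfl⟩
  have hd0 : 0 < d := by rw [hd]; exact_mod_cast q.den_pos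
  set r := round (d * γ) with hr
  have hcop : IsCoprime q.num d := by
    rw [Int.isCoprime_iff_gcd_eq_one]
    rw [hd]; exact q.reduced
  obtain ⟨u, v, huv⟩ := hcop
  set n := (r * u) % d + d with hn
  have hn1 : d ≤ n := by have := Int.emod_nonneg (r * u) hd0.ne'; omega
  have hn2 : n < 2 * d := by have := Int.emod_lt_of_pos (r * u) hd0; omega
  obtain ⟨k, hk⟩ : ∃ k, n * q.num - r = d * k := by
    have h1 := Int.emod_add_mul_ediv (r * u) d
    refine ⟨q.num - (r * u / d) * q.num - r * v, ?_⟩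
    have : n = r * u - d * (r * u / d) + d := by rw [hn]; linarith
    rw [this]
    linear_combination r * huv
  refine ⟨n, ?_, ?_⟩
  · have hdR : (0 : ℝ) < d := by exact_mod_cast hd0
    have hdd : (q.den : ℝ) = d := by rw [hd]; simp
    have hnR1 : (d : ℝ) ≤ n := by exact_mod_cast hn1
    have hnR2 : (n : ℝ) ≤ 2 * d := by exact_mod_cast hn2.le
    have h3 : (q : ℝ) = q.num / d := by rw [← hdd]; exact Rat.cast_def q
    have hk' : (n : ℝ) * q.num - r = d * k := by exact_mod_cast hk
    have hr' : |(d : ℝ) * γ - r| ≤ 1 / 2 := abs_sub_round _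
    rw [hdd] at hq
    have e : (n : ℝ) * α - γ - k = n * (α - q) - (d * γ - r) / d := by
      rw [h3]
      field_simp
      linear_combination hk'
    have hb : nint (n * α - γ) ≤ 5 / 2 / d := by
      unfold nint
      refine (round_le _ k).trans ?_
      rw [e]
      refine (abs_sub _ _).trans ?_
      rw [abs_mul, abs_div, abs_of_pos hdR, abs_of_pos (by linarith : (0 : ℝ) < n)]
      have b1 : (n : ℝ) * |α - q| ≤ 2 * d * (1 / d ^ 2) := by
        apply mul_le_mul hnR2 hq.le <;> positivity
      have b2 : |(d : ℝ) * γ - r| / d ≤ 1 / 2 / d := by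
        gcongr
      have b3 : 2 * (d : ℝ) * (1 / d ^ 2) = 2 / d := by field_simp
      have b4 : (5 : ℝ) / 2 / d = 2 / d + 1 / 2 / d := by ring
      rw [b4]; linarith
    show |(n : ℝ)| * nint (n * α - γ) ≤ 5
    rw [abs_of_pos (by linarith : (0 : ℝ) < n)]
    have h0 : 0 ≤ nint (n * α - γ) := abs_nonneg _
    calc (n : ℝ) * nint (n * α - γ) ≤ 2 * d * (5 / 2 / d) := by
          apply mul_le_mul hnR2 hb h0; positivity
      _ = 5 := by field_simp
  · have : (B.toNat : ℤ) < d := by rw [hd]; exact_mod_cast hB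
    omega

lemma Mval_le (α γ : ℝ) (h : Irrational α) : Mval α γ ≤ 5 := by
  unfold Mval
  refine Filter.liminf_le_of_frequently_le (upper α γ h) ?_
  refine ⟨0, Filter.eventually_map.2 (Filter.Eventually.of_forall fun n => ?_)⟩
  exact mul_nonneg (abs_nonneg _) (abs_nonneg _)

/-- If the regular continued fraction expansion of the irrational `α` has only finitely
many partial quotients equal to `1`, then `ρ(α) ≥ 1/(2√13+8)`. -/
theorem stmt5 (α : ℝ) (hirr : Irrational α)
    (h : ∀ᶠ n in Filter.atTop, rcfA α n ≠ 1) :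
    rho α ≥ 1 / (2 * Real.sqrt 13 + 8) := by
  rw [cc_eq]
  have hx2 := xc_hi
  have hc1 : 0 < cc := by unfold cc; linarith
  obtain ⟨K0, hK0⟩ := Filter.eventually_atTop.1 h
  set S := sysOf α hirr with hS
  have hK : ∀ n, K0 + 1 ≤ n → 2 ≤ S.A n := by
    intro n hn
    have h1 := hK0 (n + 1) (by omega)
    have h2 := S.hA n
    have h3 : rcfA α (n + 1) = S.A n := rfl
    omega
  obtain ⟨C, hC⟩ := S.mainGrid (K0 + 1) hK (by omega)
  set γ : ℝ := (1 + Int.fract α + S.E 0) / 2 with hγ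
  have hT1 : S.T 1 = Int.fract α := by
    show ts (rcfT α) 0 * rcfT α 0 = _
    simp [ts, rcfT]
  have key : ∀ N m : ℤ, cc ≤ |2 * (N : ℝ)| * |2 * (N * α - γ - m)| ∨
      (0 < |2 * (N * α - γ - m)| ∧ |2 * (N : ℝ)| ≤ C * (|2 * (N * α - γ - m)| + 1)) := by
    intro N m
    refine hC _ _ (2 * (m - N * ⌊α⌋) + 1) (2 * N - 1) ⟨_, rfl⟩ ⟨N - 1, by ring⟩ ?_ ?_
    · rw [S.Q0, S.Q1, S.D0]; congr 1; push_cast; ring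
    · rw [S.T0, hT1, hγ, ← abs_neg]; congr 1; push_cast
      have := Int.floor_add_fract α
      linear_combination (2 * (N : ℝ)) * this
  have hγn : ¬∃ p q : ℤ, γ = (p : ℝ) + (q : ℝ) * α := by
    rintro ⟨p, q, hpq⟩
    have e : 2 * ((q : ℝ) * α - γ - (-p : ℤ)) = 0 := by rw [hpq]; push_cast; ring
    rcases key q (-p) with h1 | h1
    · rw [e] at h1; simp at h1; linarith
    · rw [e] at h1; simp at h1
  have hM : cc / 4 ≤ Mval α γ := by
    unfold Mval
    refine Filter.le_liminf_of_le (Filter.IsCoboundedUnder.of_frequently_le (upper α γ hirr)) ?_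
    have hfin : {n : ℤ | |(n : ℝ)| ≤ |C|}.Finite := by
      obtain ⟨M, hM⟩ := exists_nat_ge |C|
      refine (Set.finite_Icc (-(M : ℤ)) M).subset ?_
      intro n hn
      have := abs_le.1 (le_trans hn hM)
      exact ⟨by exact_mod_cast this.1, by exact_mod_cast this.2⟩
    filter_upwards [hfin.compl_mem_cofinite] with n hn
    have hn' : |C| < |(n : ℝ)| := by simpa using hn
    unfold nint
    set m := round (n * α - γ)
    have hr : |(n : ℝ) * α - γ - m| ≤ 1 / 2 := abs_sub_round _
    have h2 : |(2 : ℝ)| = 2 := by norm_num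
    rcases key n m with h1 | ⟨-, h1⟩
    · rw [abs_mul, abs_mul, h2] at h1
      linarith
    · rw [abs_mul, abs_mul, h2] at h1
      exfalso
      have h0 := abs_nonneg ((n : ℝ) * α - γ - m)
      have : C * (2 * |(n : ℝ) * α - γ - m| + 1) ≤ |C| * 2 := by
        apply mul_le_mul (le_abs_self _) <;> first | linarith | positivity
      linarith
  refine le_trans hM ?_
  unfold rho
  refine le_csSup ⟨5, ?_⟩ ⟨γ, hγn, rfl⟩
  rintro _ ⟨γ', -, rfl⟩
  exact Mval_le α γ' hirr
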